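/- Let k ≥ 0 and let μ be a partition of 2k + 1 with μ₁ ≤ k + 1. Then there exists a sequence of partitions ∅ = λ⁰, λ¹, …, λ^k, λ^{k+1} = μ such that for every 0 ≤ j ≤ k one has |λ^j| = 2j and λ^j_1 ≤ j, for every 0 ≤ j < k the partition λ^{j+1} is obtained from λ^j by adding two boxes no two in the same row (λ^j_i ≤ λ^{j+1}_i ≤ λ^j_i + 1 for all i), and μ is obtained from λ^k by adding a single box. -/

import Mathlib

/-- A partition of `n`: a non-increasing sequence `parts 0 ≥ parts 1 ≥ ⋯`
(`parts j` is the `(j+1)`-th part, padded with zeros) with exactly `len`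
nonzero parts, summing to `n`. -/
structure PartitionOf (n : ℕ) where
  parts : ℕ → ℕ
  antitone : ∀ j : ℕ, parts (j + 1) ≤ parts j
  len : ℕ
  pos_of_lt : ∀ j < len, 0 < parts j
  zero_of_le : ∀ j : ℕ, len ≤ j → parts j = 0
  sum_parts : ∑ j ∈ Finset.range len, parts j = n

namespace PartitionOf

/-- A non-increasing sequence vanishing from `L` on is the sequence of parts of a partition. -/
theorem exists_parts_eq {n : ℕ} (f : ℕ → ℕ) (hf : ∀ j, f (j + 1) ≤ f j) (L : ℕ)
    (hL : ∀ j, L ≤ j → f j = 0) (hsum : ∑ j ∈ Finset.range L, f j = n) :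
    ∃ ν : PartitionOf n, ν.parts = f := by
  induction L with
  | zero => exact ⟨⟨f, hf, 0, by simp, hL, hsum⟩, rfl⟩
  | succ L ih =>
    by_cases h : f L = 0
    · refine ih (fun j hj => ?_) (by simpa [Finset.sum_range_succ, h] using hsum)
      have := antitone_nat_of_succ_le hf hj
      omega
    · refine ⟨⟨f, hf, L + 1, fun j hj => ?_, hL, hsum⟩, rfl⟩
      have := antitone_nat_of_succ_le hf (Nat.le_of_lt_succ hj)
      omega

theorem sum_range_parts_le {n : ℕ} (ν : PartitionOf n) (m : ℕ) :
    ∑ j ∈ Finset.range m, ν.parts j ≤ n := by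
  conv_rhs => rw [← ν.sum_parts]
  refine Finset.sum_le_sum_of_ne_zero fun j _ hj => ?_
  by_contra h
  exact hj (ν.zero_of_le j (by simpa using h))

theorem parts_le_parts_zero {n : ℕ} (ν : PartitionOf n) (i : ℕ) : ν.parts i ≤ ν.parts 0 :=
  antitone_nat_of_succ_le ν.antitone (Nat.zero_le i)

/-- A box at the end of a row strictly longer than the next one can be removed. -/
theorem exists_remove_box {n : ℕ} (ν : PartitionOf (n + 1)) (i : ℕ)
    (hi : ν.parts (i + 1) < ν.parts i) :
    ∃ ρ : PartitionOf n, ν.parts i = ρ.parts i + 1 ∧ ∀ j, j ≠ i → ν.parts j = ρ.parts j := by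
  have hlen : i < ν.len := by
    by_contra h
    have := ν.zero_of_le i (not_lt.mp h)
    omega
  obtain ⟨ρ, hρ⟩ := exists_parts_eq (n := n) (fun j => if j = i then ν.parts i - 1 else ν.parts j)
    (fun j => by
      have := ν.antitone j
      split_ifs <;> subst_vars <;> omega)
    ν.len (fun j hj => by simp [show j ≠ i by omega, ν.zero_of_le j hj])
    (by
      have hmem : i ∈ Finset.range ν.len := Finset.mem_range.mpr hlen
      have h := ν.sum_parts
      rw [← Finset.add_sum_erase _ _ hmem] at h ⊢
      have hcongr : ∑ j ∈ (Finset.range ν.len).erase i,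
          (if j = i then ν.parts i - 1 else ν.parts j) =
          ∑ j ∈ (Finset.range ν.len).erase i, ν.parts j :=
        Finset.sum_congr rfl fun j hj => if_neg (Finset.ne_of_mem_erase hj)
      rw [hcongr, if_pos rfl]
      omega)
  refine ⟨ρ, ?_, fun j hj => ?_⟩
  · simp only [hρ, if_true]
    omega
  · simp [hρ, hj]

theorem parts_last {n : ℕ} (ν : PartitionOf n) {m : ℕ} (h : ν.len = m + 1) :
    ν.parts (m + 1) < ν.parts m := by
  rw [ν.zero_of_le (m + 1) h.le]
  exact ν.pos_of_lt m (by omega)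

/-- Boxes can be removed from the last row and from an earlier row `r` which either is the
penultimate one or is strictly longer than the next row. -/
theorem exists_remove_two_boxes {n m r : ℕ} (ν : PartitionOf (n + 2)) (hm : ν.len = m + 1)
    (hr : r < m) (h : r + 1 = m ∨ ν.parts (r + 1) < ν.parts r) :
    ∃ ρ : PartitionOf n, ν.parts r = ρ.parts r + 1 ∧
      ∀ i, ρ.parts i ≤ ν.parts i ∧ ν.parts i ≤ ρ.parts i + 1 := by
  obtain ⟨σ, hσm, hσ⟩ := exists_remove_box (n := n + 1) ν m (ν.parts_last hm)
  have hσr := hσ r hr.ne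
  obtain ⟨ρ, hρr, hρ⟩ := exists_remove_box σ r (by
    rcases h with rfl | h
    · have := ν.antitone r
      omega
    · by_cases hrm : r + 1 = m
      · subst hrm
        omega
      · have := hσ (r + 1) hrm
        omega)
  refine ⟨ρ, by omega, fun i => ?_⟩
  by_cases him : i = m
  · subst him
    have := hρ i hr.ne'
    omega
  · have := hσ i him
    by_cases hir : i = r
    · subst hir
      omega
    · have := hρ i hir
      omega

/-- A partition of `2(j + 1)` with parts at most `j + 1` arises from a partition of `2j` with
parts at most `j` by adding two boxes in different rows. -/
theorem exists_vertical_strip_pred {j : ℕ} (ν : PartitionOf (2 * (j + 1)))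
    (hν : ν.parts 0 ≤ j + 1) :
    ∃ ρ : PartitionOf (2 * j), ρ.parts 0 ≤ j ∧
      ∀ i, ρ.parts i ≤ ν.parts i ∧ ν.parts i ≤ ρ.parts i + 1 := by
  have hlen : 2 ≤ ν.len := by
    by_contra h
    have hsum := ν.sum_parts
    obtain h0 | h1 : ν.len = 0 ∨ ν.len = 1 := by omega
    · simp [h0] at hsum
    · simp [h1] at hsum
      omega
  obtain ⟨m, hm⟩ : ∃ m, ν.len = m + 2 := ⟨ν.len - 2, by omega⟩
  by_cases h : ν.parts 1 < ν.parts 0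
  · obtain ⟨ρ, h0, hρ⟩ := exists_remove_two_boxes (n := 2 * j) ν hm (Nat.succ_pos m) (Or.inr h)
    exact ⟨ρ, by omega, hρ⟩
  · obtain ⟨ρ, h0, hρ⟩ := exists_remove_two_boxes (n := 2 * j) ν hm (Nat.lt_succ_self m)
      (Or.inl rfl)
    refine ⟨ρ, ?_, hρ⟩
    rcases Nat.eq_zero_or_pos m with rfl | hmpos
    · omega
    · have hsum := ν.sum_range_parts_le 3
      have hpos := ν.pos_of_lt 2 (by omega)
      simp only [Finset.sum_range_succ, Finset.sum_range_zero] at hsum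
      have := hρ 0
      omega

/-- A partition of `2k + 1` with parts at most `k + 1` arises from a partition of `2k` with
parts at most `k` by adding one box. -/
theorem exists_box_pred {k : ℕ} (μ : PartitionOf (2 * k + 1)) (hμ : μ.parts 0 ≤ k + 1) :
    ∃ ρ : PartitionOf (2 * k), ρ.parts 0 ≤ k ∧ ∃ i₀ : ℕ, μ.parts i₀ = ρ.parts i₀ + 1 ∧
      ∀ i : ℕ, i ≠ i₀ → μ.parts i = ρ.parts i := by
  by_cases h : μ.parts 0 = k + 1
  · have hsum := μ.sum_range_parts_le 2
    simp only [Finset.sum_range_succ, Finset.sum_range_zero] at hsum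
    obtain ⟨ρ, h0, hρ⟩ := exists_remove_box μ 0 (by rw [zero_add]; omega)
    exact ⟨ρ, by omega, 0, h0, hρ⟩
  · have hlen : μ.len ≠ 0 := fun h0 => by
      have := μ.sum_parts
      simp [h0] at this
    obtain ⟨m, hm⟩ := Nat.exists_eq_succ_of_ne_zero hlen
    obtain ⟨ρ, hm0, hρ⟩ := exists_remove_box μ m (μ.parts_last hm)
    refine ⟨ρ, ?_, m, hm0, hρ⟩
    by_cases h0 : 0 = m
    · subst h0
      omega
    · have := hρ 0 h0
      omega

theorem nonempty (n : ℕ) : Nonempty (PartitionOf n) :=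
  (exists_parts_eq (n := n) (fun j => if j = 0 then n else 0)
    (fun j => by simp) 1 (fun j hj => by simp; omega) (by simp)).nonempty

/-- A partition of `2k` with parts at most `k` is reached from the empty partition by `k` steps
adding two boxes in different rows. -/
theorem exists_vertical_strip_chain {k : ℕ} (ν : PartitionOf (2 * k)) (hν : ν.parts 0 ≤ k) :
    ∃ lam : (j : ℕ) → PartitionOf (2 * j), lam k = ν ∧
      (∀ j : ℕ, j ≤ k → (lam j).parts 0 ≤ j) ∧
      ∀ j : ℕ, j < k → ∀ i : ℕ,
        (lam j).parts i ≤ (lam (j + 1)).parts i ∧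
        (lam (j + 1)).parts i ≤ (lam j).parts i + 1 := by
  induction k with
  | zero =>
    refine ⟨Function.update (fun j => (nonempty (2 * j)).some) 0 ν, by simp, fun j hj => ?_,
      by simp⟩
    obtain rfl : j = 0 := by omega
    simpa using hν
  | succ k ih =>
    obtain ⟨ρ, hρ0, hρ⟩ := exists_vertical_strip_pred ν hν
    obtain ⟨lam, hlam, hle, hstep⟩ := ih ρ hρ0
    refine ⟨Function.update lam (k + 1) ν, by simp, fun j hj => ?_, fun j hj i => ?_⟩
    · rcases hj.eq_or_lt with rfl | hj
      · simpa using hν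
      · simpa [hj.ne] using hle j (by omega)
    · rcases (Nat.le_of_lt_succ hj).eq_or_lt with rfl | hj'
      · simpa [hlam] using hρ i
      · rw [Function.update_of_ne (by omega), Function.update_of_ne (by omega)]
        exact hstep j hj' i

end PartitionOf

/-- For every partition `μ` of `2k + 1` with `μ₁ ≤ k + 1` there is a chain
`∅ = λ⁰, λ¹, …, λ^k, λ^{k+1} = μ` of partitions with `|λ^j| = 2j` and `λ^j₁ ≤ j`
for `j ≤ k`, each `λ^{j+1}` (for `j < k`) obtained from `λ^j` by adding two boxes
no two in the same row, and `μ` obtained from `λ^k` by adding a single box. -/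
theorem exists_vertical_strip_chain_odd (k : ℕ) (μ : PartitionOf (2 * k + 1))
    (hμ : μ.parts 0 ≤ k + 1) :
    ∃ lam : (j : ℕ) → PartitionOf (2 * j),
      (∀ i : ℕ, (lam 0).parts i = 0) ∧
      (∀ j : ℕ, j ≤ k → (lam j).parts 0 ≤ j) ∧
      (∀ j : ℕ, j < k → ∀ i : ℕ,
        (lam j).parts i ≤ (lam (j + 1)).parts i ∧
        (lam (j + 1)).parts i ≤ (lam j).parts i + 1) ∧
      ∃ i₀ : ℕ, μ.parts i₀ = (lam k).parts i₀ + 1 ∧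
        ∀ i : ℕ, i ≠ i₀ → μ.parts i = (lam k).parts i := by
  obtain ⟨ρ, hρ, hbox⟩ := μ.exists_box_pred hμ
  obtain ⟨lam, rfl, hle, hstep⟩ := ρ.exists_vertical_strip_chain hρ
  exact ⟨lam, fun i => Nat.le_zero.mp (((lam 0).parts_le_parts_zero i).trans (hle 0 k.zero_le)),
    hle, hstep, hbox⟩
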